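/- Let n be a positive integer and ω a normalized U(1)-valued 3-cocycle on ℤ/nℤ. Then there exists a normalized 2-cochain c : ℤ × ℤ → U(1) such that dc(x,y,z) = ω(x mod n, y mod n, z mod n) for all integers x, y, z, and c(x,y) = 1 whenever both x and y are divisible by n. -/

import Mathlib

/-!
A `3`-cocycle `η` on `ℤ` with `η x y 1 = 1` for all `x`, `y` is identically `1`: the cocycle
identity at `(x, y, z, 1)` reads `η x y (z + 1) = η x y z`, and at `(x, y, 0, 1)` it gives
`η x y 0 = 1`. So a `3`-cocycle `ω` on `ℤ` equals `dc` as soon as the two agree at `(x, y, 1)`.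
If `c x 1 = 1` for all `x`, this agreement is the recurrence `c x (y + 1) = c x y * (ω x y 1)⁻¹`,
which can be solved on `ℤ`. When `ω` is the pullback of a normalized cocycle along `φ`, it is `1`
wherever `x ∈ ker φ`, so the recurrence gives `c x y = 1` for such `x`.
-/

section Cochains

variable {G H A : Type*} [CommGroup A]

/-- The (inhomogeneous) `3`-cocycle condition for the trivial action of the additively written `G`
on the multiplicatively written `A`. Normalization is not part of it. -/
def IsThreeCocycle [Add G] (ω : G → G → G → A) : Prop :=
  ∀ g₁ g₂ g₃ g₄,
    ω (g₁ + g₂) g₃ g₄ * ω g₁ g₂ (g₃ + g₄) = ω g₂ g₃ g₄ * ω g₁ (g₂ + g₃) g₄ * ω g₁ g₂ g₃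

/-- The coboundary `dc` of a `2`-cochain `c`, for the trivial action; it is the inverse of the
differential of the standard inhomogeneous complex. -/
def twoCoboundary [Add G] (c : G → G → A) (x y z : G) : A :=
  (c y z)⁻¹ * c (x + y) z * (c x (y + z))⁻¹ * c x y

theorem isThreeCocycle_twoCoboundary [AddSemigroup G] (c : G → G → A) :
    IsThreeCocycle (twoCoboundary c) := by
  intro g₁ g₂ g₃ g₄
  apply Additive.ofMul.injective
  simp only [twoCoboundary, add_assoc, ofMul_mul, ofMul_inv]
  abel

namespace IsThreeCocycle

theorem div [Add G] {ω η : G → G → G → A} (hω : IsThreeCocycle ω) (hη : IsThreeCocycle η) :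
    IsThreeCocycle fun x y z ↦ ω x y z / η x y z := by
  intro g₁ g₂ g₃ g₄
  simp only [div_mul_div_comm, hω g₁ g₂ g₃ g₄, hη g₁ g₂ g₃ g₄]

theorem comp [Add G] [Add H] {ω : G → G → G → A} (hω : IsThreeCocycle ω) (φ : H →ₙ+ G) :
    IsThreeCocycle fun x y z ↦ ω (φ x) (φ y) (φ z) := by
  intro g₁ g₂ g₃ g₄
  simpa only [map_add] using hω (φ g₁) (φ g₂) (φ g₃) (φ g₄)

theorem zero_left_eq_one [AddZeroClass G] {ω : G → G → G → A} (hω : IsThreeCocycle ω)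
    (h_mid : ∀ g k, ω g 0 k = 1) (h k : G) : ω 0 h k = 1 := by
  simpa [h_mid] using hω 0 0 h k

theorem eq_one_of_right_one {η : ℤ → ℤ → ℤ → A} (hη : IsThreeCocycle η)
    (h_one : ∀ x y, η x y 1 = 1) (x y z : ℤ) : η x y z = 1 := by
  have h_periodic : Function.Periodic (η x y) 1 := fun z ↦ by
    simpa [h_one] using hη x y z 1
  have h_zero : η x y 0 = 1 := by
    simpa [h_one] using (hη x y 0 1).symm
  calc η x y z = η x y 0 := by simpa using h_periodic.int_mul_eq z
    _ = 1 := h_zero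

end IsThreeCocycle

end Cochains

section Integers

variable {A : Type*} [CommGroup A]

/-- The indefinite product `∏_{0 ≤ k < n} a k` of a sequence on `ℤ`, with the sign convention of
the interval integral for `n < 0`; it solves `f (n + 1) = f n * a n`, `f 0 = 1`. -/
noncomputable def indefiniteProd (a : ℤ → A) (n : ℤ) : A :=
  (∏ k ∈ Finset.Ico 0 n, a k) / ∏ k ∈ Finset.Ico n 0, a k

@[simp]
theorem indefiniteProd_zero (a : ℤ → A) : indefiniteProd a 0 = 1 := by
  simp [indefiniteProd]

theorem indefiniteProd_add_one (a : ℤ → A) (n : ℤ) :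
    indefiniteProd a (n + 1) = indefiniteProd a n * a n := by
  unfold indefiniteProd
  rcases le_or_gt 0 n with hn | hn
  · rw [← Finset.insert_Ico_right_eq_Ico_add_one hn, Finset.prod_insert Finset.right_notMem_Ico,
      Finset.Ico_eq_empty_of_le hn, Finset.Ico_eq_empty_of_le (by lia : 0 ≤ n + 1)]
    simp [mul_comm]
  · rw [← Finset.insert_Ico_add_one_left_eq_Ico hn, Finset.prod_insert (by simp),
      Finset.Ico_eq_empty_of_le hn.le, Finset.Ico_eq_empty_of_le (by lia : n + 1 ≤ 0)]
    simp

/-- The `2`-cochain on `ℤ` whose coboundary is a given `3`-cocycle `ω`. The factor `ω x 0 1`, which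
is `1` for normalized `ω`, ensures that its value at `(x, 1)` is `1`. -/
noncomputable def intTrivialization (ω : ℤ → ℤ → ℤ → A) (x y : ℤ) : A :=
  ω x 0 1 * indefiniteProd (fun k ↦ (ω x k 1)⁻¹) y

theorem intTrivialization_zero_right (ω : ℤ → ℤ → ℤ → A) (x : ℤ) :
    intTrivialization ω x 0 = ω x 0 1 := by
  simp [intTrivialization]

theorem intTrivialization_add_one (ω : ℤ → ℤ → ℤ → A) (x y : ℤ) :
    intTrivialization ω x (y + 1) = intTrivialization ω x y * (ω x y 1)⁻¹ := by
  simp only [intTrivialization, indefiniteProd_add_one, mul_assoc]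

theorem intTrivialization_one_right (ω : ℤ → ℤ → ℤ → A) (x : ℤ) :
    intTrivialization ω x 1 = 1 := by
  simpa [intTrivialization_zero_right] using intTrivialization_add_one ω x 0

theorem intTrivialization_eq_one {ω : ℤ → ℤ → ℤ → A} {x : ℤ} (hx : ∀ k, ω x k 1 = 1) (y : ℤ) :
    intTrivialization ω x y = 1 := by
  simp [intTrivialization, indefiniteProd, hx]

theorem IsThreeCocycle.twoCoboundary_intTrivialization {ω : ℤ → ℤ → ℤ → A}
    (hω : IsThreeCocycle ω) : twoCoboundary (intTrivialization ω) = ω := by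
  have h_one (x y : ℤ) : twoCoboundary (intTrivialization ω) x y 1 = ω x y 1 := by
    simp [twoCoboundary, intTrivialization_one_right, intTrivialization_add_one]
  funext x y z
  refine div_eq_one.mp (((isThreeCocycle_twoCoboundary _).div hω).eq_one_of_right_one ?_ x y z)
  exact fun x y ↦ div_eq_one.mpr (h_one x y)

end Integers

theorem pullback_to_Z_trivializes_general {G A : Type*} [AddZeroClass G] [CommGroup A]
    (φ : ℤ →+ G) {ω : G → G → G → A} (hω : IsThreeCocycle ω) (h_mid : ∀ g k, ω g 0 k = 1) :
    ∃ c : ℤ → ℤ → A,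
      (∀ x y, x = 0 ∨ y = 0 → c x y = 1) ∧
      (∀ x y z, twoCoboundary c x y z = ω (φ x) (φ y) (φ z)) ∧
      (∀ x y, φ x = 0 → c x y = 1) := by
  let ω' : ℤ → ℤ → ℤ → A := fun x y z ↦ ω (φ x) (φ y) (φ z)
  have hω' : IsThreeCocycle ω' := hω.comp (φ : ℤ →ₙ+ G)
  have h_ker (x y : ℤ) (hx : φ x = 0) : intTrivialization ω' x y = 1 :=
    intTrivialization_eq_one (fun k ↦ by simp [ω', hx, hω.zero_left_eq_one h_mid]) y
  refine ⟨intTrivialization ω', ?_, fun x y z ↦ ?_, h_ker⟩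
  · rintro x y (rfl | rfl)
    · exact h_ker 0 y (map_zero φ)
    · simp [intTrivialization_zero_right, ω', h_mid]
  · rw [hω'.twoCoboundary_intTrivialization]

/-- **Statement 12** (Sections 3.1 and 4.3 of the paper, for `ρ : ℤ → ℤ/nℤ`).  Every
normalized `U(1)`-valued 3-cocycle on `ℤ/nℤ` pulls back along `ℤ → ℤ/nℤ` to the coboundary of
a normalized 2-cochain `c` on `ℤ` which is identically `1` on the kernel `nℤ`. -/
theorem pullback_to_Z_trivializes
    (n : ℕ) (hn : 0 < n)
    (ω : ZMod n → ZMod n → ZMod n → Circle)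
    (hω_norm : ∀ g h k, g = 0 ∨ h = 0 ∨ k = 0 → ω g h k = 1)
    (hω_coc : ∀ g₁ g₂ g₃ g₄,
      ω (g₁ + g₂) g₃ g₄ * ω g₁ g₂ (g₃ + g₄)
        = ω g₂ g₃ g₄ * ω g₁ (g₂ + g₃) g₄ * ω g₁ g₂ g₃) :
    ∃ c : ℤ → ℤ → Circle,
      (∀ x y, x = 0 ∨ y = 0 → c x y = 1) ∧
      (∀ x y z : ℤ,
        (c y z)⁻¹ * c (x + y) z * (c x (y + z))⁻¹ * c x y
          = ω (x : ZMod n) (y : ZMod n) (z : ZMod n)) ∧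
      (∀ x y : ℤ, (n : ℤ) ∣ x → (n : ℤ) ∣ y → c x y = 1) := by
  obtain ⟨c, hc_norm, hc, hc_ker⟩ := pullback_to_Z_trivializes_general
    (Int.castAddHom (ZMod n)) hω_coc fun g k ↦ hω_norm g 0 k (.inr (.inl rfl))
  exact ⟨c, hc_norm, hc, fun x y hx _ ↦ hc_ker x y ((ZMod.intCast_zmod_eq_zero_iff_dvd x n).mpr hx)⟩
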